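/- There is a universal constant C > 0 such that the following holds. Suppose G_k ≤ 1 for every k = 1,…,N. Then for every k and every t ∈ [t_{k−1}, t_k], the forward process satisfies E‖x_t − x_{t_k}‖² ≤ C·(d·G_{t,t_k} + M₂·G_{t,t_k}²), and consequently Σ_{k=1}^N ∫_{t_{k−1}}^{t_k} g(t)²·E‖x_t − x_{t_k}‖² dt ≤ C·(d·Π₂ + M₂·Π₃). -/

import Mathlib

open MeasureTheory Real

noncomputable section

namespace DiffusionKL

/-- Euclidean space `ℝ^d`. -/
abbrev Vec (d : ℕ) := EuclideanSpace ℝ (Fin d)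

/-- Density of the isotropic Gaussian `N(m, v·I_d)` on `ℝ^d`. -/
def gaussDensity (d : ℕ) (m : Vec d) (v : ℝ) (x : Vec d) : ℝ :=
  (2 * π * v) ^ (-(d : ℝ) / 2) * Real.exp (-‖x - m‖ ^ 2 / (2 * v))

/-- The isotropic Gaussian measure `N(m, v·I_d)` on `ℝ^d`. -/
def gaussMeasure (d : ℕ) (m : Vec d) (v : ℝ) : Measure (Vec d) :=
  MeasureTheory.volume.withDensity (fun x => ENNReal.ofReal (gaussDensity d m v x))

/-- The standard Gaussian measure `γ_d = N(0, I_d)` on `ℝ^d`. -/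
def stdGauss (d : ℕ) : Measure (Vec d) := gaussMeasure d 0 1

/-- Kullback-Leibler divergence `KL(μ ‖ ν) = ∫ log (dμ/dν) dμ`. -/
def KLdiv {d : ℕ} (μ ν : Measure (Vec d)) : ℝ :=
  ∫ x, Real.log ((μ.rnDeriv ν x).toReal) ∂μ

/-- `G_{t,s} = ∫_t^s g(u)² du`. -/
def Gvar (g : ℝ → ℝ) (t s : ℝ) : ℝ := ∫ u in t..s, (g u) ^ 2

/-- `α_{t,s} = exp(−G_{t,s}/2)`. -/
def alphaF (g : ℝ → ℝ) (t s : ℝ) : ℝ := Real.exp (-(Gvar g t s) / 2)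

/-- `σ_t² = 1 − exp(−G_t)`. -/
def sigmaSq (g : ℝ → ℝ) (t : ℝ) : ℝ := 1 - Real.exp (-(Gvar g 0 t))

/-- The law of the forward marginal `x_t = α_t X₀ + σ_t Z`, `X₀ ∼ P`, `Z ∼ N(0,I_d)` indep. -/
def forwardLaw (d : ℕ) (P : Measure (Vec d)) (g : ℝ → ℝ) (t : ℝ) : Measure (Vec d) :=
  Measure.map (fun q : Vec d × Vec d => alphaF g 0 t • q.1 + Real.sqrt (sigmaSq g t) • q.2)
    (P.prod (stdGauss d))

/-- Explicit density of the forward marginal `p_t` (for `t > 0`). -/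
def forwardDensity (d : ℕ) (P : Measure (Vec d)) (g : ℝ → ℝ) (t : ℝ) (x : Vec d) : ℝ :=
  (2 * π * sigmaSq g t) ^ (-(d : ℝ) / 2) *
    ∫ y, Real.exp (-‖x - alphaF g 0 t • y‖ ^ 2 / (2 * sigmaSq g t)) ∂P

/-- Score function `∇ log p` of a density `p`. -/
def scoreOf {d : ℕ} (p : Vec d → ℝ) (x : Vec d) : Vec d :=
  gradient (fun z => Real.log (p z)) x

/-- Score `∇ log p_t` of the forward marginal at time `t > 0`. -/
def fwdScore (d : ℕ) (P : Measure (Vec d)) (g : ℝ → ℝ) (t : ℝ) : Vec d → Vec d :=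
  scoreOf (forwardDensity d P g t)

/-- Underlying measure for the joint forward coupling: `ω = (X₀, Z, Z')`. -/
def coupleMeasure (d : ℕ) (P : Measure (Vec d)) : Measure (Vec d × Vec d × Vec d) :=
  P.prod ((stdGauss d).prod (stdGauss d))

/-- The forward process at time `t`: `x_t(ω) = α_t X₀ + σ_t Z`. -/
def xt (d : ℕ) (g : ℝ → ℝ) (t : ℝ) (ω : Vec d × Vec d × Vec d) : Vec d :=
  alphaF g 0 t • ω.1 + Real.sqrt (sigmaSq g t) • ω.2.1

/-- The forward process at time `s ≥ t`, coupled with `x_t` by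
`x_s = α_{t,s} x_t + √(1−α_{t,s}²) Z'`. -/
def xts (d : ℕ) (g : ℝ → ℝ) (t s : ℝ) (ω : Vec d × Vec d × Vec d) : Vec d :=
  alphaF g t s • xt d g t ω + Real.sqrt (1 - (alphaF g t s) ^ 2) • ω.2.2

/-- Law of a Markov chain after `n` steps, started at `init`, with transition kernels `κ`. -/
def chainLaw (d : ℕ) (init : Measure (Vec d)) (κ : ℕ → Vec d → Measure (Vec d)) :
    ℕ → Measure (Vec d)
  | 0 => init
  | k + 1 => (chainLaw d init κ k).bind (κ k)

/-- One step of the exponential-integrator sampler: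
`ŷ_{k+1} | ŷ_k = a ∼ N(e^{G_{N−k}/2}·a + 2(e^{G_{N−k}/2} − 1)·s(a,t_{N−k}), (e^{G_{N−k}} − 1)·I_d)`. -/
def EIstep (d N : ℕ) (tp : ℕ → ℝ) (g : ℝ → ℝ) (sc : Vec d → ℝ → Vec d) (k : ℕ) (a : Vec d) :
    Measure (Vec d) :=
  gaussMeasure d
    (Real.exp (Gvar g (tp (N - k - 1)) (tp (N - k)) / 2) • a +
      (2 * (Real.exp (Gvar g (tp (N - k - 1)) (tp (N - k)) / 2) - 1)) • sc a (tp (N - k)))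
    (Real.exp (Gvar g (tp (N - k - 1)) (tp (N - k))) - 1)

/-- One step of the Euler–Maruyama sampler:
`ŷ_{k+1} | ŷ_k = a ∼ N((1 + G_{N−k}/2)·a + G_{N−k}·s(a,t_{N−k}), G_{N−k}·I_d)`. -/
def EMstep (d N : ℕ) (tp : ℕ → ℝ) (g : ℝ → ℝ) (sc : Vec d → ℝ → Vec d) (k : ℕ) (a : Vec d) :
    Measure (Vec d) :=
  gaussMeasure d
    ((1 + Gvar g (tp (N - k - 1)) (tp (N - k)) / 2) • a +
      (Gvar g (tp (N - k - 1)) (tp (N - k))) • sc a (tp (N - k)))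
    (Gvar g (tp (N - k - 1)) (tp (N - k)))

/-- Terminal law of the exponential-integrator sampler started at `N(0,I_d)`. -/
def EIlaw (d N : ℕ) (tp : ℕ → ℝ) (g : ℝ → ℝ) (sc : Vec d → ℝ → Vec d) : Measure (Vec d) :=
  chainLaw d (stdGauss d) (EIstep d N tp g sc) N

/-- Terminal law of the Euler–Maruyama sampler started at `N(0,I_d)`. -/
def EMlaw (d N : ℕ) (tp : ℕ → ℝ) (g : ℝ → ℝ) (sc : Vec d → ℝ → Vec d) : Measure (Vec d) :=
  chainLaw d (stdGauss d) (EMstep d N tp g sc) N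

/-- The weighted L² score estimation error
`(1/G_T)·Σ_{k=1}^N G_k·E_{p_{t_k}} ‖∇log p_{t_k}(x) − s(x,t_k)‖²`. -/
def scoreErr (d N : ℕ) (P : Measure (Vec d)) (g : ℝ → ℝ) (tp : ℕ → ℝ)
    (sc : Vec d → ℝ → Vec d) : ℝ :=
  (1 / Gvar g 0 (tp N)) * ∑ k ∈ Finset.range N,
    Gvar g (tp k) (tp (k + 1)) *
      ∫ x, ‖fwdScore d P g (tp (k + 1)) x - sc x (tp (k + 1))‖ ^ 2
        ∂(forwardLaw d P g (tp (k + 1)))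

/-- Entry `(i,j)` of the Hessian matrix `∇²f(x)`. -/
def hessEntry {d : ℕ} (f : Vec d → ℝ) (x : Vec d) (i j : Fin d) : ℝ :=
  fderiv ℝ (fun y => fderiv ℝ f y (EuclideanSpace.single j 1)) x (EuclideanSpace.single i 1)

/-- Frobenius norm of the Hessian matrix `∇²f(x)`. -/
def hessFrob {d : ℕ} (f : Vec d → ℝ) (x : Vec d) : ℝ :=
  Real.sqrt (∑ i, ∑ j, (hessEntry f x i j) ^ 2)

/-- Density of the Gaussian perturbation `X + σZ`, `X ∼ P`, `Z ∼ N(0,I_d)`. -/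
def perturbDensity (d : ℕ) (P : Measure (Vec d)) (σ : ℝ) (x : Vec d) : ℝ :=
  (2 * π * σ ^ 2) ^ (-(d : ℝ) / 2) * ∫ y, Real.exp (-‖x - y‖ ^ 2 / (2 * σ ^ 2)) ∂P

/-- Density of `μY + σZ`, `Y ∼ P`, `Z ∼ N(0,I_d)`. -/
def perturbDensity' (d : ℕ) (P : Measure (Vec d)) (μ σ : ℝ) (x : Vec d) : ℝ :=
  (2 * π * σ ^ 2) ^ (-(d : ℝ) / 2) * ∫ y, Real.exp (-‖x - μ • y‖ ^ 2 / (2 * σ ^ 2)) ∂P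

/-- Law of the Gaussian perturbation `X + σZ`. -/
def perturbLaw (d : ℕ) (P : Measure (Vec d)) (σ : ℝ) : Measure (Vec d) :=
  Measure.map (fun q : Vec d × Vec d => q.1 + σ • q.2)
    (P.prod (MeasureTheory.volume.withDensity
      (fun x : Vec d => ENNReal.ofReal ((2 * π) ^ (-(d : ℝ) / 2) * Real.exp (-‖x‖ ^ 2 / 2)))))

/-- The tilted conditional measure `dP̃_{μ,σ}(y|x) ∝ exp(−‖x−μy‖²/(2σ²)) dP(y)`. -/
def tiltMeasure (d : ℕ) (P : Measure (Vec d)) (μ σ : ℝ) (x : Vec d) : Measure (Vec d) :=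
  ((P.withDensity (fun y => ENNReal.ofReal (Real.exp (-‖x - μ • y‖ ^ 2 / (2 * σ ^ 2))))) Set.univ)⁻¹ •
    P.withDensity (fun y => ENNReal.ofReal (Real.exp (-‖x - μ • y‖ ^ 2 / (2 * σ ^ 2))))

/-- Sub-exponential (ψ₁-Orlicz) norm of `f` under the measure `μ`. -/
def psi1Norm {α : Type*} [MeasurableSpace α] (μ : Measure α) (f : α → ℝ) : ℝ :=
  sInf {t : ℝ | 0 < t ∧ ∫ x, Real.exp (|f x| / t) ∂μ ≤ 2}

/-- Sub-Gaussian (ψ₂-Orlicz) norm of `f` under the measure `μ`. -/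
def psi2Norm {α : Type*} [MeasurableSpace α] (μ : Measure α) (f : α → ℝ) : ℝ :=
  sInf {t : ℝ | 0 < t ∧ ∫ x, Real.exp ((f x) ^ 2 / t ^ 2) ∂μ ≤ 2}



lemma gaussDensity_toLp (d : ℕ) (y : Fin d → ℝ) :
    gaussDensity d 0 1 (WithLp.toLp 2 y) = ∏ i, ProbabilityTheory.gaussianPDFReal 0 1 (y i) := by
  simp only [gaussDensity, ProbabilityTheory.gaussianPDFReal, Finset.prod_mul_distrib,
    ← Real.exp_sum, EuclideanSpace.norm_sq_eq, sub_zero, Finset.prod_const, Finset.card_univ,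
    Fintype.card_fin, mul_one, NNReal.coe_one, Real.norm_eq_abs, sq_abs]
  congr 1
  · rw [Real.sqrt_eq_rpow, ← Real.rpow_neg (by positivity), ← Real.rpow_natCast,
      ← Real.rpow_mul (by positivity)]
    congr 1
    ring
  · congr 1
    rw [← Finset.sum_div, Finset.sum_neg_distrib]

lemma gaussDensity_nonneg (d : ℕ) (x : Vec d) : 0 ≤ gaussDensity d 0 1 x := by
  unfold gaussDensity; positivity

lemma measurable_gaussDensity (d : ℕ) : Measurable (gaussDensity d 0 1) := by
  unfold gaussDensity; fun_prop

lemma integrable_comp_toLp {d : ℕ} {f : Vec d → ℝ} :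
    Integrable (fun y : Fin d → ℝ => f (WithLp.toLp 2 y)) ↔ Integrable f :=
  (PiLp.volume_preserving_toLp (Fin d)).integrable_comp_emb
    (MeasurableEquiv.toLp 2 (Fin d → ℝ)).measurableEmbedding

lemma integral_comp_toLp {d : ℕ} (f : Vec d → ℝ) :
    ∫ y : Fin d → ℝ, f (WithLp.toLp 2 y) = ∫ x, f x :=
  (PiLp.volume_preserving_toLp (Fin d)).integral_comp
    (MeasurableEquiv.toLp 2 (Fin d → ℝ)).measurableEmbedding f

lemma integrable_gaussDensity (d : ℕ) : Integrable (gaussDensity d 0 1) := by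
  rw [← integrable_comp_toLp]
  simp only [gaussDensity_toLp]
  exact Integrable.fintype_prod (f := fun _ : Fin d => ProbabilityTheory.gaussianPDFReal 0 1)
    (fun i => ProbabilityTheory.integrable_gaussianPDFReal 0 1)

lemma integral_gaussDensity (d : ℕ) : ∫ x, gaussDensity d 0 1 x = 1 := by
  rw [← integral_comp_toLp]
  simp only [gaussDensity_toLp]
  rw [integral_fintype_prod_volume_eq_prod
    (f := fun _ : Fin d => ProbabilityTheory.gaussianPDFReal 0 1)]
  simp [ProbabilityTheory.integral_gaussianPDFReal_eq_one]

instance isProb_stdGauss (d : ℕ) : IsProbabilityMeasure (stdGauss d) := by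
  constructor
  rw [stdGauss, gaussMeasure, withDensity_apply _ MeasurableSet.univ, Measure.restrict_univ,
    ← ofReal_integral_eq_lintegral_ofReal (integrable_gaussDensity d)
      (Filter.Eventually.of_forall (gaussDensity_nonneg d)), integral_gaussDensity]
  simp

lemma sq_pdf_integrable :
    Integrable (fun x : ℝ => x ^ 2 * ProbabilityTheory.gaussianPDFReal 0 1 x) := by
  have h := (ProbabilityTheory.memLp_id_gaussianReal (μ := 0) (v := 1) 2).integrable_sq
  rw [ProbabilityTheory.gaussianReal_of_var_ne_zero _ one_ne_zero,
    integrable_withDensity_iff (ProbabilityTheory.measurable_gaussianPDF _ _)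
      (Filter.Eventually.of_forall fun _ => ProbabilityTheory.gaussianPDF_lt_top)] at h
  simpa using h

lemma sq_pdf_integral :
    ∫ x : ℝ, x ^ 2 * ProbabilityTheory.gaussianPDFReal 0 1 x = 1 := by
  have h := ProbabilityTheory.variance_fun_id_gaussianReal (μ := 0) (v := 1)
  rw [ProbabilityTheory.variance_eq_integral (by fun_prop),
    ProbabilityTheory.integral_id_gaussianReal,
    ProbabilityTheory.integral_gaussianReal_eq_integral_smul one_ne_zero] at h
  simpa [mul_comm] using h

lemma coord_eq (d : ℕ) (i : Fin d) (y : Fin d → ℝ) :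
    (y i) ^ 2 * ∏ j, ProbabilityTheory.gaussianPDFReal 0 1 (y j) =
      ∏ j, ((if j = i then (y j) ^ 2 else 1) * ProbabilityTheory.gaussianPDFReal 0 1 (y j)) := by
  rw [Finset.prod_mul_distrib]
  simp

lemma coord_integrable (d : ℕ) (i : Fin d) : Integrable (fun y : Fin d → ℝ =>
    (y i) ^ 2 * ∏ j, ProbabilityTheory.gaussianPDFReal 0 1 (y j)) := by
  simp only [coord_eq]
  refine Integrable.fintype_prod (f := fun j x => (if j = i then x ^ 2 else 1) *
    ProbabilityTheory.gaussianPDFReal 0 1 x) (fun j => ?_)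
  by_cases h : j = i
  · simpa [h] using sq_pdf_integrable
  · simpa [h] using ProbabilityTheory.integrable_gaussianPDFReal 0 1

lemma coord_integral (d : ℕ) (i : Fin d) : ∫ y : Fin d → ℝ,
    (y i) ^ 2 * ∏ j, ProbabilityTheory.gaussianPDFReal 0 1 (y j) = 1 := by
  simp only [coord_eq]
  rw [integral_fintype_prod_volume_eq_prod (f := fun j x => (if j = i then x ^ 2 else 1) *
    ProbabilityTheory.gaussianPDFReal 0 1 x)]
  refine Finset.prod_eq_one fun j _ => ?_
  by_cases h : j = i
  · simpa [h] using sq_pdf_integral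
  · simpa [h] using ProbabilityTheory.integral_gaussianPDFReal_eq_one 0 one_ne_zero

lemma norm_sq_dens (d : ℕ) (y : Fin d → ℝ) :
    ‖(WithLp.toLp 2 y : Vec d)‖ ^ 2 * gaussDensity d 0 1 (WithLp.toLp 2 y) =
      ∑ i, (y i) ^ 2 * ∏ j, ProbabilityTheory.gaussianPDFReal 0 1 (y j) := by
  rw [gaussDensity_toLp, EuclideanSpace.norm_sq_eq, Finset.sum_mul]
  simp

lemma stdGauss_sq_integrable (d : ℕ) : Integrable (fun x => ‖x‖ ^ 2) (stdGauss d) := by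
  rw [stdGauss, gaussMeasure, integrable_withDensity_iff
    (measurable_gaussDensity d).ennreal_ofReal (Filter.Eventually.of_forall fun _ => by simp)]
  simp only [ENNReal.toReal_ofReal (gaussDensity_nonneg d _)]
  rw [← integrable_comp_toLp]
  simp only [norm_sq_dens]
  exact integrable_finsetSum _ fun i _ => coord_integrable d i

lemma stdGauss_sq_integral (d : ℕ) : ∫ x, ‖x‖ ^ 2 ∂(stdGauss d) = d := by
  rw [stdGauss, gaussMeasure, integral_withDensity_eq_integral_toReal_smul
    (measurable_gaussDensity d).ennreal_ofReal (Filter.Eventually.of_forall fun _ => by simp)]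
  simp only [ENNReal.toReal_ofReal (gaussDensity_nonneg d _), smul_eq_mul]
  simp only [mul_comm (gaussDensity d 0 1 _)]
  rw [← integral_comp_toLp (fun x => ‖x‖ ^ 2 * gaussDensity d 0 1 x)]
  simp only [norm_sq_dens]
  rw [integral_finsetSum _ fun i _ => coord_integrable d i]
  simp [coord_integral]

lemma norm3 {d : ℕ} (a b c : ℝ) (x y z : Vec d) :
    ‖a • x + b • y + c • z‖ ^ 2 ≤
      3 * a ^ 2 * ‖x‖ ^ 2 + (3 * b ^ 2 * ‖y‖ ^ 2 + 3 * c ^ 2 * ‖z‖ ^ 2) := by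
  have h : ‖a • x + b • y + c • z‖ ≤ |a| * ‖x‖ + |b| * ‖y‖ + |c| * ‖z‖ := by
    refine (norm_add₃_le).trans ?_
    simp [norm_smul]
  have h2 := pow_le_pow_left₀ (norm_nonneg _) h 2
  rw [← sq_abs a, ← sq_abs b, ← sq_abs c]
  nlinarith [sq_nonneg (|a| * ‖x‖ - |b| * ‖y‖), sq_nonneg (|a| * ‖x‖ - |c| * ‖z‖),
    sq_nonneg (|b| * ‖y‖ - |c| * ‖z‖)]

lemma couple_bound (d : ℕ) (P : Measure (Vec d)) [IsProbabilityMeasure P]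
    (hP : Integrable (fun x => ‖x‖ ^ 2) P) (a b c : ℝ) :
    ∫ ω, ‖a • ω.1 + b • ω.2.1 + c • ω.2.2‖ ^ 2 ∂(coupleMeasure d P) ≤
      3 * a ^ 2 * (∫ x, ‖x‖ ^ 2 ∂P) + (3 * b ^ 2 * d + 3 * c ^ 2 * d) := by
  have hG := stdGauss_sq_integrable d
  have i1 : Integrable (fun ω : Vec d × Vec d × Vec d => 3 * a ^ 2 * ‖ω.1‖ ^ 2)
      (coupleMeasure d P) := (hP.comp_fst ((stdGauss d).prod (stdGauss d))).const_mul _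
  have i2 : Integrable (fun ω : Vec d × Vec d × Vec d => 3 * b ^ 2 * ‖ω.2.1‖ ^ 2)
      (coupleMeasure d P) := ((hG.comp_fst (stdGauss d)).comp_snd P).const_mul _
  have i3 : Integrable (fun ω : Vec d × Vec d × Vec d => 3 * c ^ 2 * ‖ω.2.2‖ ^ 2)
      (coupleMeasure d P) := ((hG.comp_snd (stdGauss d)).comp_snd P).const_mul _
  have e1 : ∫ ω, ‖ω.1‖ ^ 2 ∂(coupleMeasure d P) = ∫ x, ‖x‖ ^ 2 ∂P := by
    rw [coupleMeasure, integral_fun_fst (f := fun x : Vec d => ‖x‖ ^ 2)]; simp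
  have e2 : ∫ ω, ‖ω.2.1‖ ^ 2 ∂(coupleMeasure d P) = d := by
    rw [coupleMeasure, integral_fun_snd (f := fun x : Vec d × Vec d => ‖x.1‖ ^ 2),
      integral_fun_fst (f := fun x : Vec d => ‖x‖ ^ 2), stdGauss_sq_integral]; simp
  have e3 : ∫ ω, ‖ω.2.2‖ ^ 2 ∂(coupleMeasure d P) = d := by
    rw [coupleMeasure, integral_fun_snd (f := fun x : Vec d × Vec d => ‖x.2‖ ^ 2),
      integral_fun_snd (f := fun x : Vec d => ‖x‖ ^ 2), stdGauss_sq_integral]; simp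
  refine (integral_mono_of_nonneg (Filter.Eventually.of_forall fun _ => by positivity)
    (i1.add (i2.add i3)) (Filter.Eventually.of_forall fun ω => norm3 a b c _ _ _)).trans ?_
  refine le_of_eq ?_
  rw [integral_add' i1 (i2.add i3), integral_add' i2 i3]
  simp only [integral_const_mul, e1, e2, e3]

lemma step_bound (d : ℕ) (P : Measure (Vec d)) [IsProbabilityMeasure P]
    (hP : Integrable (fun x => ‖x‖ ^ 2) P) (g : ℝ → ℝ) (t s : ℝ)
    (h0 : 0 ≤ Gvar g 0 t) (h1 : 0 ≤ Gvar g t s) (h2 : Gvar g t s ≤ 1) :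
    (∫ ω, ‖xt d g t ω - xts d g t s ω‖ ^ 2 ∂(coupleMeasure d P)) ≤
      4 * ((d : ℝ) * Gvar g t s + (∫ x, ‖x‖ ^ 2 ∂P) * (Gvar g t s) ^ 2) := by
  have hb := couple_bound d P hP ((1 - alphaF g t s) * alphaF g 0 t)
    ((1 - alphaF g t s) * √(sigmaSq g t)) (-√(1 - (alphaF g t s) ^ 2))
  have he : ∀ ω, xt d g t ω - xts d g t s ω =
      ((1 - alphaF g t s) * alphaF g 0 t) • ω.1 + ((1 - alphaF g t s) * √(sigmaSq g t)) • ω.2.1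
        + (-√(1 - (alphaF g t s) ^ 2)) • ω.2.2 := by
    intro ω
    unfold xts xt
    module
  simp only [he]
  refine hb.trans ?_
  have hM : 0 ≤ ∫ x, ‖x‖ ^ 2 ∂P := integral_nonneg fun _ => by positivity
  have hd : (0 : ℝ) ≤ d := by positivity
  set M := ∫ x, ‖x‖ ^ 2 ∂P
  have hA : (alphaF g t s) ^ 2 = Real.exp (-(Gvar g t s)) := by
    rw [alphaF, ← Real.exp_nat_mul]; congr 1; push_cast; ring
  have hA1 : 1 - (alphaF g t s) ^ 2 ≤ Gvar g t s := by
    rw [hA]; linarith [Real.add_one_le_exp (-(Gvar g t s))]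
  have hA0 : 0 ≤ 1 - (alphaF g t s) ^ 2 := by
    rw [hA]; linarith [Real.exp_le_one_iff.2 (neg_nonpos.2 h1)]
  have hB1 : 1 - alphaF g t s ≤ Gvar g t s / 2 := by
    rw [alphaF]; linarith [Real.add_one_le_exp (-(Gvar g t s) / 2)]
  have hB0 : 0 ≤ 1 - alphaF g t s := by
    rw [alphaF]
    linarith [Real.exp_le_one_iff.2 (show -(Gvar g t s) / 2 ≤ 0 by linarith)]
  have hS0 : 0 ≤ sigmaSq g t := by
    rw [sigmaSq]; linarith [Real.exp_le_one_iff.2 (neg_nonpos.2 h0)]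
  have hS1 : sigmaSq g t ≤ 1 := by
    rw [sigmaSq]; linarith [Real.exp_pos (-(Gvar g 0 t))]
  have hC0 : 0 ≤ alphaF g 0 t := (Real.exp_pos _).le
  have hC1 : alphaF g 0 t ≤ 1 := by
    rw [alphaF]; exact Real.exp_le_one_iff.2 (by linarith)
  rw [neg_sq, mul_pow, mul_pow, Real.sq_sqrt hS0, Real.sq_sqrt hA0]
  have hB2 : (1 - alphaF g t s) ^ 2 ≤ Gvar g t s ^ 2 / 4 := by nlinarith
  have hC2 : alphaF g 0 t ^ 2 ≤ 1 := by nlinarith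
  generalize Gvar g t s = G at *
  have p1 : (1 - alphaF g t s) ^ 2 * alphaF g 0 t ^ 2 ≤ G ^ 2 / 4 := by
    calc _ ≤ G ^ 2 / 4 * 1 := by gcongr
      _ = _ := by ring
  have p2 : (1 - alphaF g t s) ^ 2 * sigmaSq g t ≤ G / 4 := by
    calc _ ≤ G ^ 2 / 4 * 1 := by gcongr
      _ ≤ _ := by nlinarith
  have q1 := mul_le_mul_of_nonneg_right p1 hM
  have q2 := mul_le_mul_of_nonneg_right p2 hd
  have q3 := mul_le_mul_of_nonneg_right hA1 hd
  have q4 : 0 ≤ M * G ^ 2 := by positivity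
  have q5 : 0 ≤ d * G := by positivity
  nlinarith

/-- Lemma `linear-discretization`: bound on `E‖x_t − x_{t_k}‖²` along the
forward process, and on the resulting summed discretization error. -/
theorem statement6 :
    ∃ C : ℝ, 0 < C ∧
      ∀ (d N : ℕ) (T : ℝ) (P : Measure (Vec d)) (g : ℝ → ℝ) (tp : ℕ → ℝ),
        IsProbabilityMeasure P → 0 < N →
        ContinuousOn g (Set.Icc 0 T) → (∀ t ∈ Set.Ioc (0 : ℝ) T, 0 < g t) →
        0 ≤ tp 0 → tp N = T → (∀ k < N, tp k < tp (k + 1)) →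
        Integrable (fun x => ‖x‖ ^ 2) P →
        (∀ k < N, Gvar g (tp k) (tp (k + 1)) ≤ 1) →
        (∀ k, 1 ≤ k → k ≤ N → ∀ t ∈ Set.Icc (tp (k - 1)) (tp k),
          (∫ ω, ‖xt d g t ω - xts d g t (tp k) ω‖ ^ 2 ∂(coupleMeasure d P)) ≤
            C * ((d : ℝ) * Gvar g t (tp k) +
              (∫ x, ‖x‖ ^ 2 ∂P) * (Gvar g t (tp k)) ^ 2)) ∧
        (∑ k ∈ Finset.range N, ∫ t in tp k..tp (k + 1),
            (g t) ^ 2 * ∫ ω, ‖xt d g t ω - xts d g t (tp (k + 1)) ω‖ ^ 2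
              ∂(coupleMeasure d P)) ≤
          C * ((d : ℝ) * ∑ k ∈ Finset.range N, (Gvar g (tp k) (tp (k + 1))) ^ 2 +
            (∫ x, ‖x‖ ^ 2 ∂P) * ∑ k ∈ Finset.range N, (Gvar g (tp k) (tp (k + 1))) ^ 3) := by
  refine ⟨4, by norm_num, ?_⟩
  intro d N T P g tp hPp hN hg hgpos h0 hT htp hM hG
  have hmono : ∀ n ≤ N, ∀ m ≤ n, tp m ≤ tp n := by
    intro n
    induction n with
    | zero => intro _ m hm; rw [Nat.le_zero.1 hm]
    | succ n ih =>
      intro hn m hm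
      rcases Nat.le_succ_iff.1 hm with h | h
      · exact (ih (by omega) m h).trans (htp n (by omega)).le
      · rw [h]
  have hgint : ∀ a b, 0 ≤ a → a ≤ b → b ≤ T →
      IntervalIntegrable (fun u => (g u) ^ 2) volume a b := by
    intro a b ha hab hb
    apply ContinuousOn.intervalIntegrable
    rw [Set.uIcc_of_le hab]
    exact (hg.mono (Set.Icc_subset_Icc ha hb)).pow 2
  have hnn : ∀ a b, a ≤ b → 0 ≤ Gvar g a b := fun a b hab =>
    intervalIntegral.integral_nonneg hab fun _ _ => sq_nonneg _
  have hle : ∀ k < N, ∀ t ∈ Set.Icc (tp k) (tp (k + 1)),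
      0 ≤ t ∧ Gvar g t (tp (k + 1)) ≤ Gvar g (tp k) (tp (k + 1)) := by
    intro k hk t ht
    have hk0 : 0 ≤ tp k := h0.trans (hmono k hk.le 0 (Nat.zero_le _))
    have hkT : tp (k + 1) ≤ T := hT ▸ hmono N le_rfl (k + 1) hk
    refine ⟨hk0.trans ht.1, ?_⟩
    have := intervalIntegral.integral_add_adjacent_intervals
      (hgint (tp k) t hk0 ht.1 (ht.2.trans hkT)) (hgint t (tp (k + 1)) (hk0.trans ht.1) ht.2 hkT)
    have h3 := hnn (tp k) t ht.1
    unfold Gvar at *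
    linarith
  have hmain : ∀ k < N, ∀ t ∈ Set.Icc (tp k) (tp (k + 1)),
      (∫ ω, ‖xt d g t ω - xts d g t (tp (k + 1)) ω‖ ^ 2 ∂(coupleMeasure d P)) ≤
        4 * ((d : ℝ) * Gvar g t (tp (k + 1)) +
          (∫ x, ‖x‖ ^ 2 ∂P) * (Gvar g t (tp (k + 1))) ^ 2) := by
    intro k hk t ht
    obtain ⟨ht0, hl⟩ := hle k hk t ht
    exact step_bound d P hM g t _ (hnn 0 t ht0) (hnn _ _ ht.2) (hl.trans (hG k hk))
  refine ⟨?_, ?_⟩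
  · intro k hk1 hkN t ht
    obtain ⟨k, rfl⟩ : ∃ j, k = j + 1 := ⟨k - 1, by omega⟩
    exact hmain k (by omega) t ht
  · have hMn : 0 ≤ ∫ x, ‖x‖ ^ 2 ∂P := integral_nonneg fun _ => by positivity
    rw [Finset.mul_sum, Finset.mul_sum, ← Finset.sum_add_distrib, Finset.mul_sum]
    refine Finset.sum_le_sum fun k hk => ?_
    have hk := Finset.mem_range.1 hk
    have hlt := htp k hk
    have hk0 : 0 ≤ tp k := h0.trans (hmono k hk.le 0 (Nat.zero_le _))
    have hkT : tp (k + 1) ≤ T := hT ▸ hmono N le_rfl (k + 1) hk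
    set K := Gvar g (tp k) (tp (k + 1)) with hK
    have hbd : (∫ t in tp k..tp (k + 1),
        (g t) ^ 2 * ∫ ω, ‖xt d g t ω - xts d g t (tp (k + 1)) ω‖ ^ 2 ∂(coupleMeasure d P)) ≤
        ∫ t in tp k..tp (k + 1), (g t) ^ 2 *
          (4 * ((d : ℝ) * K + (∫ x, ‖x‖ ^ 2 ∂P) * K ^ 2)) := by
      rw [intervalIntegral.integral_of_le hlt.le, intervalIntegral.integral_of_le hlt.le]
      refine integral_mono_of_nonneg (Filter.Eventually.of_forall fun t =>
        mul_nonneg (sq_nonneg _) (integral_nonneg fun _ => by positivity)) ?_ ?_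
      · exact ((hgint _ _ hk0 hlt.le hkT).mul_const _).1
      · refine (ae_restrict_iff' measurableSet_Ioc).2 (Filter.Eventually.of_forall fun t ht => ?_)
        have htI := Set.Ioc_subset_Icc_self ht
        refine mul_le_mul_of_nonneg_left ((hmain k hk t htI).trans ?_) (sq_nonneg _)
        have := (hle k hk t htI).2
        have := hnn t (tp (k + 1)) ht.2
        gcongr
    refine hbd.trans (le_of_eq ?_)
    rw [intervalIntegral.integral_mul_const]
    change K * _ = _
    ring

end DiffusionKL
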